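/- The average optimal complementary coverage probability is nonincreasing in the sample size: for every integer t ≥ 0, Σ_{s=0}^{t+1} C(t+1,s)·m_{t+1}(s)·𝒞_{t+1}(s) ≤ Σ_{s=0}^{t} C(t,s)·m_t(s)·𝒞_t(s), where C(n,k) denotes the binomial coefficient. -/

import Mathlib

open MeasureTheory Set


/-- `m_t(s) = ∫_0^1 θ^s (1-θ)^(t-s) π(θ) dθ`. -/
noncomputable def margLik (π : ℝ → ℝ) (t s : ℕ) : ℝ :=
  ∫ θ in Ioc (0:ℝ) 1, θ ^ s * (1 - θ) ^ (t - s) * π θ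

/-- Posterior density `π_t(θ|s)`. -/
noncomputable def postDens (π : ℝ → ℝ) (t s : ℕ) (θ : ℝ) : ℝ :=
  θ ^ s * (1 - θ) ^ (t - s) * π θ / margLik π t s

/-- Posterior coverage of the interval `[a-h, a+h]` cropped to `[0,1]`. -/
noncomputable def covFn (h : ℝ) (π : ℝ → ℝ) (t s : ℕ) (a : ℝ) : ℝ :=
  ∫ θ in Ioc (max (a - h) 0) (min (a + h) 1), postDens π t s θ

/-- Optimal conditional complementary coverage probability `𝒞_t(s)`. -/
noncomputable def Copt (h : ℝ) (π : ℝ → ℝ) (t s : ℕ) : ℝ :=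
  1 - sSup (covFn h π t s '' Icc 0 1)

/-- Predictive probability `g_{t+1}(s) = m_{t+1}(s+1)/m_t(s)`. -/
noncomputable def gpred (π : ℝ → ℝ) (t s : ℕ) : ℝ :=
  margLik π (t + 1) (s + 1) / margLik π t s

/-- Auxiliary backward recursion: `Vaux k s = V_{N-k}(s)`. -/
noncomputable def Vaux (h : ℝ) (π : ℝ → ℝ) (c : ℝ) (N : ℕ) : ℕ → ℕ → ℝ
  | 0, s => Copt h π N s
  | k + 1, s =>
      min (Copt h π (N - (k + 1)) s)
        (c + gpred π (N - (k + 1)) s * Vaux h π c N k (s + 1)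
           + (1 - gpred π (N - (k + 1)) s) * Vaux h π c N k s)

/-- Optimal residual cost `V_t(s)` for horizon `N` and sampling cost `c`. -/
noncomputable def Vopt (h : ℝ) (π : ℝ → ℝ) (c : ℝ) (N t s : ℕ) : ℝ :=
  Vaux h π c N (N - t) s

lemma aux_integ (π : ℝ → ℝ) (hπ1 : (∫ θ in (0:ℝ)..1, π θ) = 1) (p q : ℕ) :
    IntegrableOn (fun θ => θ ^ p * (1 - θ) ^ q * π θ) (Ioc (0:ℝ) 1) := by
  have h1 : IntegrableOn π (Ioc (0:ℝ) 1) := by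
    by_contra hc
    rw [intervalIntegral.integral_of_le zero_le_one, integral_undef hc] at hπ1
    exact zero_ne_one hπ1
  refine Integrable.bdd_mul (c := 1) h1 ?_ ?_
  · exact (by fun_prop : Continuous fun θ : ℝ => θ ^ p * (1 - θ) ^ q).aestronglyMeasurable
  · refine (ae_restrict_iff' measurableSet_Ioc).2 (Filter.Eventually.of_forall ?_)
    rintro θ ⟨h0, h1⟩
    have a0 : 0 ≤ θ ^ p := pow_nonneg h0.le _
    have a1 : θ ^ p ≤ 1 := pow_le_one₀ h0.le h1
    have b0 : 0 ≤ (1 - θ) ^ q := pow_nonneg (by linarith) _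
    have b1 : (1 - θ) ^ q ≤ 1 := pow_le_one₀ (by linarith) (by linarith)
    rw [Real.norm_of_nonneg (mul_nonneg a0 b0)]
    exact mul_le_one₀ a1 b0 b1

lemma aux_cov (h : ℝ) (π : ℝ → ℝ) (t s : ℕ) (hm : 0 < margLik π t s) (a : ℝ) :
    margLik π t s * covFn h π t s a =
      ∫ θ in Ioc (max (a - h) 0) (min (a + h) 1), θ ^ s * (1 - θ) ^ (t - s) * π θ := by
  unfold covFn postDens
  rw [integral_div, mul_div_cancel₀ _ hm.ne']

lemma aux_split (π : ℝ → ℝ) (hπ1 : (∫ θ in (0:ℝ)..1, π θ) = 1) (t s : ℕ) (hs : s ≤ t)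
    (A : Set ℝ) (hA : A ⊆ Ioc 0 1) :
    ∫ θ in A, θ ^ s * (1 - θ) ^ (t - s) * π θ =
      (∫ θ in A, θ ^ s * (1 - θ) ^ (t + 1 - s) * π θ) +
      ∫ θ in A, θ ^ (s + 1) * (1 - θ) ^ (t + 1 - (s + 1)) * π θ := by
  rw [← integral_add ((aux_integ π hπ1 _ _).mono_set hA) ((aux_integ π hπ1 _ _).mono_set hA)]
  congr 1
  funext θ
  rw [Nat.succ_sub hs, Nat.add_sub_add_right, pow_succ (1 - θ)]
  ring

lemma aux_sub (h a : ℝ) : Ioc (max (a - h) 0) (min (a + h) 1) ⊆ Ioc 0 1 :=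
  Ioc_subset_Ioc (le_max_right _ _) (min_le_right _ _)

lemma aux_bdd (h : ℝ) (π : ℝ → ℝ) (hπ0 : ∀ θ, 0 ≤ π θ) (hπ1 : (∫ θ in (0:ℝ)..1, π θ) = 1)
    (t s : ℕ) (hm : 0 < margLik π t s) : BddAbove (covFn h π t s '' Icc 0 1) := by
  refine ⟨1, ?_⟩
  rintro _ ⟨a, -, rfl⟩
  refine le_of_mul_le_mul_left ?_ hm
  rw [aux_cov h π t s hm, mul_one]
  refine setIntegral_mono_set (aux_integ π hπ1 _ _) ?_ (aux_sub h a).eventuallyLE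
  refine (ae_restrict_iff' measurableSet_Ioc).2 (Filter.Eventually.of_forall ?_)
  rintro θ ⟨h0, h1⟩
  exact mul_nonneg (mul_nonneg (pow_nonneg h0.le _) (pow_nonneg (by linarith) _)) (hπ0 θ)

lemma aux_step (h : ℝ) (π : ℝ → ℝ) (hπ0 : ∀ θ, 0 ≤ π θ) (hπ1 : (∫ θ in (0:ℝ)..1, π θ) = 1)
    (hm : ∀ t s : ℕ, 0 < margLik π t s) (t s : ℕ) (hs : s ≤ t) :
    margLik π (t + 1) s * Copt h π (t + 1) s +
      margLik π (t + 1) (s + 1) * Copt h π (t + 1) (s + 1) ≤ margLik π t s * Copt h π t s := by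
  have e : margLik π t s = margLik π (t + 1) s + margLik π (t + 1) (s + 1) :=
    aux_split π hπ1 t s hs _ Subset.rfl
  have key : margLik π t s * sSup (covFn h π t s '' Icc 0 1) ≤
      margLik π (t + 1) s * sSup (covFn h π (t + 1) s '' Icc 0 1) +
      margLik π (t + 1) (s + 1) * sSup (covFn h π (t + 1) (s + 1) '' Icc 0 1) := by
    rw [mul_comm, ← le_div_iff₀ (hm t s)]
    refine csSup_le ((nonempty_Icc.2 zero_le_one).image _) ?_
    rintro _ ⟨a, ha, rfl⟩
    rw [le_div_iff₀ (hm t s), mul_comm, aux_cov h π t s (hm t s),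
      aux_split π hπ1 t s hs _ (aux_sub h a), ← aux_cov h π (t + 1) s (hm _ _),
      ← aux_cov h π (t + 1) (s + 1) (hm _ _)]
    exact add_le_add
      (mul_le_mul_of_nonneg_left (le_csSup (aux_bdd h π hπ0 hπ1 _ _ (hm _ _))
        (mem_image_of_mem _ ha)) (hm _ _).le)
      (mul_le_mul_of_nonneg_left (le_csSup (aux_bdd h π hπ0 hπ1 _ _ (hm _ _))
        (mem_image_of_mem _ ha)) (hm _ _).le)
  unfold Copt
  linarith

lemma aux_pascal (f : ℕ → ℝ) (t : ℕ) :
    ∑ s ∈ Finset.range (t + 2), ((t + 1).choose s : ℝ) * f s =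
      ∑ s ∈ Finset.range (t + 1), (t.choose s : ℝ) * (f s + f (s + 1)) := by
  rw [Finset.sum_range_succ']
  simp only [Nat.choose_succ_succ', Nat.cast_add, add_mul, mul_add, Finset.sum_add_distrib]
  have : ∑ s ∈ Finset.range (t + 1), (t.choose s : ℝ) * f s =
      ∑ s ∈ Finset.range (t + 2), (t.choose s : ℝ) * f s := by
    rw [Finset.sum_range_succ _ (t + 1)]
    simp
  rw [this, Finset.sum_range_succ' _ (t + 1)]
  simp
  ring

/-- the average optimal complementary coverage probability is
nonincreasing in the sample size. -/
theorem avg_Copt_nonincreasing (h : ℝ) (hh : 0 < h ∧ h < 1 / 2)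
    (π : ℝ → ℝ) (hπ0 : ∀ θ, 0 ≤ π θ) (hπ1 : (∫ θ in (0:ℝ)..1, π θ) = 1)
    (hm : ∀ t s : ℕ, 0 < margLik π t s) :
    ∀ t : ℕ,
      ∑ s ∈ Finset.range (t + 2),
          ((t + 1).choose s : ℝ) * margLik π (t + 1) s * Copt h π (t + 1) s
        ≤ ∑ s ∈ Finset.range (t + 1),
            (t.choose s : ℝ) * margLik π t s * Copt h π t s := by
  intro t
  simp only [mul_assoc]
  rw [aux_pascal (fun s => margLik π (t + 1) s * Copt h π (t + 1) s)]
  refine Finset.sum_le_sum fun s hs => ?_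
  exact mul_le_mul_of_nonneg_left
    (aux_step h π hπ0 hπ1 hm t s (Nat.lt_succ_iff.1 (Finset.mem_range.1 hs))) (Nat.cast_nonneg _)
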